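/- Let A1, A2, and B be OCAs over the same nonempty finite alphabet Σ such that L_vis(A1) ⊆ Enc_Σ, L_vis(A2) ⊆ Enc_Σ, and L_vis(B) = L_vis(A1) ∩ L_vis(A2). Then L_obs(B) = L_obs(A1) ∩ L_obs(A2). -/

import Mathlib

/-! Common framework: one-counter automata (OCAs) over a finite alphabet,
with the classical (`oca`), visibly (`vis`) and observability (`obs`) semantics. -/

/-- Letters from an alphabet `α` together with the two counter operations
`inc` and `dec`. -/
inductive Vis (α : Type*) : Type _ where
  | sym : α → Vis α
  | inc : Vis α
  | dec : Vis α

/-- A one-counter automaton (an `m`-OCA) over alphabet `α` with state set `Q`: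
an initial state, a set of final states, a threshold `m`, and a transition
relation `Δ ⊆ Q × {0,…,m} × (α ∪ {inc,dec}) × Q`. -/
structure OCA (Q : Type*) (α : Type*) where
  init : Q
  final : Set Q
  m : ℕ
  Δ : Set (Q × ℕ × Vis α × Q)
  valid : ∀ t ∈ Δ, t.2.1 ≤ m

variable {Q α : Type*}

/-- One step of an OCA, labeled by an element of `(α × ℕ) ∪ {inc, dec}`. -/
def OCA.step (A : OCA Q α) : Q × ℕ → Vis (α × ℕ) → Q × ℕ → Prop
  | (q, x), Vis.inc, (q', x') => x' = x + 1 ∧ (q, min x A.m, Vis.inc, q') ∈ A.Δ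
  | (q, x), Vis.dec, (q', x') => 1 ≤ x ∧ x' = x - 1 ∧ (q, min x A.m, Vis.dec, q') ∈ A.Δ
  | (q, x), Vis.sym (a, y), (q', x') => y = x ∧ x' = x ∧ (q, min x A.m, Vis.sym a, q') ∈ A.Δ

/-- `A.RunFrom c ts cs` holds if there is a partial run of `A` starting in
configuration `c`, with trace `ts`, visiting exactly the configurations
listed in `cs` (starting with `c`). -/
inductive OCA.RunFrom (A : OCA Q α) : Q × ℕ → List (Vis (α × ℕ)) → List (Q × ℕ) → Prop
  | nil (c : Q × ℕ) : OCA.RunFrom A c [] [c]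
  | cons {c c' : Q × ℕ} {τ : Vis (α × ℕ)} {ts : List (Vis (α × ℕ))} {cs : List (Q × ℕ)} :
      A.step c τ c' → OCA.RunFrom A c' ts cs → OCA.RunFrom A c (τ :: ts) (c :: cs)

/-- `ts` is the trace of some accepting run of `A` (a run starting in the
initial configuration `(ι,0)` whose last configuration has a final state). -/
def OCA.AccTrace (A : OCA Q α) (ts : List (Vis (α × ℕ))) : Prop :=
  ∃ cs c, A.RunFrom (A.init, 0) ts cs ∧ cs.getLast? = some c ∧ c.1 ∈ A.final

/-- Projection of a trace letter used for the visibly semantics: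
`(a,x)` becomes `a`, and `inc`/`dec` are kept. -/
def visOf : Vis (α × ℕ) → Vis α
  | Vis.sym (a, _) => Vis.sym a
  | Vis.inc => Vis.inc
  | Vis.dec => Vis.dec

/-- The visibly projection of a trace. -/
def visMap (ts : List (Vis (α × ℕ))) : List (Vis α) := ts.map visOf

/-- The observability projection of a trace: keep the pairs `(a,x)`,
erase `inc`/`dec`. -/
def obsMap (ts : List (Vis (α × ℕ))) : List (α × ℕ) :=
  ts.filterMap fun τ => match τ with
    | Vis.sym p => some p
    | _ => none

/-- The classical projection of a trace: `(a,x)` becomes `a`,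
`inc`/`dec` are erased. -/
def ocaMap (ts : List (Vis (α × ℕ))) : List α :=
  ts.filterMap fun τ => match τ with
    | Vis.sym (a, _) => some a
    | _ => none

/-- The visibly semantics `L_vis(A)`. -/
def OCA.Lvis (A : OCA Q α) : Set (List (Vis α)) :=
  {w | ∃ ts, A.AccTrace ts ∧ visMap ts = w}

/-- The observability semantics `L_obs(A)`. -/
def OCA.Lobs (A : OCA Q α) : Set (List (α × ℕ)) :=
  {w | ∃ ts, A.AccTrace ts ∧ obsMap ts = w}

/-- The classical semantics `L_oca(A)`. -/
def OCA.Loca (A : OCA Q α) : Set (List α) :=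
  {w | ∃ ts, A.AccTrace ts ∧ ocaMap ts = w}

/-- An OCA is deterministic if for every state `q`, counter test `k ≤ m` and
letter `σ ∈ α ∪ {inc,dec}` there is exactly one target state. -/
def OCA.Deterministic (A : OCA Q α) : Prop :=
  ∀ (q : Q) (k : ℕ) (σ : Vis α), k ≤ A.m → ∃! q' : Q, (q, k, σ, q') ∈ A.Δ

/-- Test for the letter `inc`. -/
def isIncB : Vis α → Bool
  | Vis.inc => true
  | _ => false

/-- Test for the letter `dec`. -/
def isDecB : Vis α → Bool
  | Vis.dec => true
  | _ => false

/-- Well-formed words over `α ∪ {inc,dec}`: no prefix contains more `dec`'s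
than `inc`'s. -/
def WFWords (α : Type*) : Set (List (Vis α)) :=
  {w | ∀ p, p <+: w → p.countP isDecB ≤ p.countP isIncB}

/-- `encFrom x0 w` encodes `w ∈ (α × ℕ)*` starting from previous counter
value `x0`: each `(a,x)` becomes `inc^(x-x0) a` (if `x ≥ x0`) or
`dec^(x0-x) a` (otherwise). -/
def encFrom : ℕ → List (α × ℕ) → List (Vis α)
  | _, [] => []
  | x0, (a, x) :: w =>
      (if x0 ≤ x then List.replicate (x - x0) Vis.inc
       else List.replicate (x0 - x) Vis.dec) ++ Vis.sym a :: encFrom x w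

/-- The encoding `enc : (α × ℕ)* → (α ∪ {inc,dec})*`. -/
def enc (w : List (α × ℕ)) : List (Vis α) := encFrom 0 w

/-- The set `Enc_α` of valid encodings. -/
def EncSet (α : Type*) : Set (List (Vis α)) := Set.range (enc (α := α))

/-- A set `S ⊆ ℕ` is ultimately periodic if there are `t` and `d ≥ 1` such
that for all `x ≥ t`, `x ∈ S ↔ x + d ∈ S`. -/
def UltPeriodic (S : Set ℕ) : Prop :=
  ∃ t d : ℕ, 1 ≤ d ∧ ∀ x : ℕ, t ≤ x → (x ∈ S ↔ x + d ∈ S)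

/-- An extended OCA (eOCA): transitions are guarded by ultimately periodic
sets of counter values, and acceptance is given by an ultimately periodic set
of counter values for each state. -/
structure EOCA (Q : Type*) (α : Type*) where
  init : Q
  f : Q → Set ℕ
  hf : ∀ q, UltPeriodic (f q)
  Δ : Set (Q × Set ℕ × Vis α × Q)
  hΔfin : Δ.Finite
  hΔup : ∀ t ∈ Δ, UltPeriodic t.2.1

/-- One step of an eOCA. -/
def EOCA.step (A : EOCA Q α) : Q × ℕ → Vis (α × ℕ) → Q × ℕ → Prop
  | (q, x), Vis.inc, (q', x') =>
      x' = x + 1 ∧ ∃ S, (q, S, Vis.inc, q') ∈ A.Δ ∧ x ∈ S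
  | (q, x), Vis.dec, (q', x') =>
      1 ≤ x ∧ x' = x - 1 ∧ ∃ S, (q, S, Vis.dec, q') ∈ A.Δ ∧ x ∈ S
  | (q, x), Vis.sym (a, y), (q', x') =>
      y = x ∧ x' = x ∧ ∃ S, (q, S, Vis.sym a, q') ∈ A.Δ ∧ x ∈ S

/-- Partial runs of an eOCA, as for OCAs. -/
inductive EOCA.RunFrom (A : EOCA Q α) : Q × ℕ → List (Vis (α × ℕ)) → List (Q × ℕ) → Prop
  | nil (c : Q × ℕ) : EOCA.RunFrom A c [] [c]
  | cons {c c' : Q × ℕ} {τ : Vis (α × ℕ)} {ts : List (Vis (α × ℕ))} {cs : List (Q × ℕ)} :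
      A.step c τ c' → EOCA.RunFrom A c' ts cs → EOCA.RunFrom A c (τ :: ts) (c :: cs)

/-- Accepting traces of an eOCA: the last configuration `(q,x)` satisfies
`x ∈ f q`. -/
def EOCA.AccTrace (A : EOCA Q α) (ts : List (Vis (α × ℕ))) : Prop :=
  ∃ cs c, A.RunFrom (A.init, 0) ts cs ∧ cs.getLast? = some c ∧ c.2 ∈ A.f c.1

/-- The visibly semantics of an eOCA. -/
def EOCA.Lvis (A : EOCA Q α) : Set (List (Vis α)) :=
  {w | ∃ ts, A.AccTrace ts ∧ visMap ts = w}

/-- The observability semantics of an eOCA. -/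
def EOCA.Lobs (A : EOCA Q α) : Set (List (α × ℕ)) :=
  {w | ∃ ts, A.AccTrace ts ∧ obsMap ts = w}

/-- The classical semantics of an eOCA. -/
def EOCA.Loca (A : EOCA Q α) : Set (List α) :=
  {w | ∃ ts, A.AccTrace ts ∧ ocaMap ts = w}

/-! Along a run, the counter value is determined by the preceding `inc` and `dec` letters, so the
observability word of a trace is a function `decode` of its visibly word, and
`L_obs(A) = decode(L_vis(A))`. Since `decode` inverts `enc`, it is injective on the set of valid
encodings, so taking images under it commutes with intersections of subsets of that set. -/

/-- The observability word read off a visibly word when the counter starts at `x`: each symbol is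
paired with the current counter value. A `dec` at counter value `0`, which no run performs, leaves
the counter at `0`. -/
def decodeFrom : ℕ → List (Vis α) → List (α × ℕ)
  | _, [] => []
  | x, Vis.inc :: w => decodeFrom (x + 1) w
  | x, Vis.dec :: w => decodeFrom (x - 1) w
  | x, Vis.sym a :: w => (a, x) :: decodeFrom x w

/-- The observability word of a visibly word, read from counter value `0`; a left inverse of
`enc`. -/
def decode (w : List (Vis α)) : List (α × ℕ) := decodeFrom 0 w

theorem decodeFrom_replicate_inc_append (n x : ℕ) (w : List (Vis α)) :
    decodeFrom x (List.replicate n Vis.inc ++ w) = decodeFrom (x + n) w := by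
  induction n generalizing x with
  | zero => rfl
  | succ n ih =>
    rw [List.replicate_succ, List.cons_append, decodeFrom, ih, Nat.add_right_comm, Nat.add_assoc]

theorem decodeFrom_replicate_dec_append (n x : ℕ) (w : List (Vis α)) :
    decodeFrom x (List.replicate n Vis.dec ++ w) = decodeFrom (x - n) w := by
  induction n generalizing x with
  | zero => rfl
  | succ n ih =>
    rw [List.replicate_succ, List.cons_append, decodeFrom, ih, Nat.sub_sub, Nat.add_comm 1 n]

theorem decodeFrom_encFrom (x : ℕ) (w : List (α × ℕ)) : decodeFrom x (encFrom x w) = w := by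
  induction w generalizing x with
  | nil => rfl
  | cons p w ih =>
    obtain ⟨a, y⟩ := p
    rw [encFrom]
    split_ifs with hxy
    · rw [decodeFrom_replicate_inc_append, Nat.add_sub_cancel' hxy, decodeFrom, ih]
    · rw [decodeFrom_replicate_dec_append, Nat.sub_sub_self (Nat.le_of_not_le hxy), decodeFrom, ih]

theorem leftInverse_decode_enc : Function.LeftInverse (decode (α := α)) enc :=
  decodeFrom_encFrom 0

theorem injOn_decode_encSet : Set.InjOn decode (EncSet α) :=
  leftInverse_decode_enc.rightInvOn_range.injOn

namespace OCA

theorem step.decodeFrom_cons {A : OCA Q α} {c c' : Q × ℕ} {τ : Vis (α × ℕ)} (h : A.step c τ c')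
    (w : List (Vis α)) :
    decodeFrom c.2 (visOf τ :: w) = obsMap [τ] ++ decodeFrom c'.2 w := by
  obtain ⟨q, x⟩ := c
  obtain ⟨q', x'⟩ := c'
  rcases τ with ⟨a, y⟩ | _ | _
  · obtain ⟨rfl, rfl, _⟩ := h
    rfl
  · obtain ⟨rfl, _⟩ := h
    rfl
  · obtain ⟨_, rfl, _⟩ := h
    rfl

theorem RunFrom.decodeFrom_visMap {A : OCA Q α} {c : Q × ℕ} {ts : List (Vis (α × ℕ))}
    {cs : List (Q × ℕ)} (h : A.RunFrom c ts cs) : decodeFrom c.2 (visMap ts) = obsMap ts := by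
  induction h with
  | nil c => rfl
  | @cons c c' τ ts _ hstep _ ih =>
    calc
      decodeFrom c.2 (visMap (τ :: ts)) = obsMap [τ] ++ decodeFrom c'.2 (visMap ts) :=
        hstep.decodeFrom_cons (visMap ts)
      _ = obsMap [τ] ++ obsMap ts := by rw [ih]
      _ = obsMap (τ :: ts) := List.filterMap_append.symm

theorem AccTrace.decode_visMap {A : OCA Q α} {ts : List (Vis (α × ℕ))} (h : A.AccTrace ts) :
    decode (visMap ts) = obsMap ts :=
  let ⟨_, _, hrun, _⟩ := h
  hrun.decodeFrom_visMap

theorem image_decode_Lvis (A : OCA Q α) : decode '' A.Lvis = A.Lobs :=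
  calc
    decode '' (visMap '' {ts | A.AccTrace ts}) =
        (fun ts => decode (visMap ts)) '' {ts | A.AccTrace ts} := Set.image_image _ _ _
    _ = obsMap '' {ts | A.AccTrace ts} := Set.image_congr fun _ h => h.decode_visMap

end OCA

theorem stmt7_general {Q₁ Q₂ Q₃ : Type*} (A₁ : OCA Q₁ α) (A₂ : OCA Q₂ α) (B : OCA Q₃ α)
    (h₁ : A₁.Lvis ⊆ EncSet α) (h₂ : A₂.Lvis ⊆ EncSet α) (hB : B.Lvis = A₁.Lvis ∩ A₂.Lvis) :
    B.Lobs = A₁.Lobs ∩ A₂.Lobs :=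
  calc
    B.Lobs = decode '' (A₁.Lvis ∩ A₂.Lvis) := by rw [← hB, B.image_decode_Lvis]
    _ = decode '' A₁.Lvis ∩ decode '' A₂.Lvis := injOn_decode_encSet.image_inter h₁ h₂
    _ = A₁.Lobs ∩ A₂.Lobs := by rw [A₁.image_decode_Lvis, A₂.image_decode_Lvis]

/-- intersection wrt. the visibly semantics yields intersection
wrt. the observability semantics, provided both visibly languages consist of
valid encodings. -/
theorem stmt7 {α Q1 Q2 Q3 : Type} [Fintype α] [Nonempty α]
    [Fintype Q1] [Fintype Q2] [Fintype Q3]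
    (A1 : OCA Q1 α) (A2 : OCA Q2 α) (B : OCA Q3 α)
    (h1 : A1.Lvis ⊆ EncSet α) (h2 : A2.Lvis ⊆ EncSet α)
    (hB : B.Lvis = A1.Lvis ∩ A2.Lvis) :
    B.Lobs = A1.Lobs ∩ A2.Lobs :=
  stmt7_general A1 A2 B h1 h2 hB
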